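/- Fix integers d ≥ 1, ℓ ≥ 0 and a real p ≥ 0, and let k(r) = Σ_{n ∈ ℤ, |n| ≥ 2} |n|^{-p} · Ψ( 2 |n|^{p+ℓ+d+1} (r − n) ) with Ψ the standard bump function. Then for every integer j with 0 ≤ j ≤ d + ℓ − 1, the moment integral ∫_ℝ |r|^j k(r) dr is finite; indeed it is bounded by a constant times Σ_{|n| ≥ 2} |n|^{j} · |n|^{-p} · |n|^{-(p+ℓ+d+1)} ≤ Σ_{|n| ≥ 2} |n|^{j - p - d - ℓ - 1} < ∞. Moreover k does not decay faster than r^{-p}: for every integer n with |n| ≥ 2 one has k(n) = |n|^{-p} e^{-1}, hence limsup_{r → ∞} r^p k(r) > 0. -/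

import Mathlib

open Filter

/-- The standard bump function `Ψ(r) = exp(−1/(1−r²))·1_{(−1,1)}(r)`. -/
noncomputable def stdBump (r : ℝ) : ℝ :=
  if r ∈ Set.Ioo (-1 : ℝ) 1 then Real.exp (-1 / (1 - r ^ 2)) else 0

/-- The spiky radial profile `k(r) = Σ_{|n|≥2} |n|^{-p} Ψ(2|n|^{p+ℓ+d+1}(r−n))`. -/
noncomputable def spikyProfile (d ℓ : ℕ) (p : ℝ) (r : ℝ) : ℝ :=
  ∑' n : {n : ℤ // 2 ≤ |n|},
    |((n : ℤ) : ℝ)| ^ (-p) *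
      stdBump (2 * |((n : ℤ) : ℝ)| ^ (p + ℓ + d + 1) * (r - ((n : ℤ) : ℝ)))

theorem stdBump_nonneg (x : ℝ) : 0 ≤ stdBump x := by
  unfold stdBump; split_ifs <;> positivity

theorem stdBump_le_one (x : ℝ) : stdBump x ≤ 1 := by
  unfold stdBump
  split_ifs with h
  · rw [Real.exp_le_one_iff]
    obtain ⟨h1, h2⟩ := h
    have : 0 < 1 - x ^ 2 := by nlinarith
    rw [neg_div]
    have : 0 < 1 / (1 - x ^ 2) := by positivity
    linarith
  · norm_num

theorem stdBump_measurable : Measurable stdBump := by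
  unfold stdBump
  apply Measurable.ite measurableSet_Ioo
  · fun_prop
  · fun_prop

/-- The summand of the profile. -/
noncomputable def spikeTerm (a p : ℝ) (n : ℤ) (r : ℝ) : ℝ :=
  |(n : ℝ)| ^ (-p) * stdBump (2 * |(n : ℝ)| ^ a * (r - (n : ℝ)))

theorem spikeTerm_nonneg (a p : ℝ) (n : ℤ) (r : ℝ) : 0 ≤ spikeTerm a p n r :=
  mul_nonneg (by positivity) (stdBump_nonneg _)

theorem two_le_abs_cast {n : ℤ} (hn : 2 ≤ |n|) : (2 : ℝ) ≤ |(n : ℝ)| := by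
  exact_mod_cast hn

theorem spikeTerm_supp {a p : ℝ} {n : ℤ} (hn : 2 ≤ |n|) {r : ℝ}
    (h : spikeTerm a p n r ≠ 0) : |r - n| < |(n : ℝ)| ^ (-a) / 2 := by
  have hN := two_le_abs_cast hn
  have h1 : stdBump (2 * |(n : ℝ)| ^ a * (r - (n : ℝ))) ≠ 0 := right_ne_zero_of_mul h
  have h2 : (2 * |(n : ℝ)| ^ a * (r - (n : ℝ))) ∈ Set.Ioo (-1 : ℝ) 1 := by
    by_contra hc
    exact h1 (by unfold stdBump; rw [if_neg hc])
  have h3 := abs_lt.2 h2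
  have hpos : 0 < |(n : ℝ)| ^ a := Real.rpow_pos_of_pos (by linarith) _
  rw [abs_mul, abs_of_pos (by positivity)] at h3
  rw [Real.rpow_neg (by positivity), ← one_div, div_div, lt_div_iff₀ (by positivity)]
  linarith

theorem spikeTerm_supp' {a p : ℝ} (ha : 0 ≤ a) {n : ℤ} (hn : 2 ≤ |n|) {r : ℝ}
    (h : spikeTerm a p n r ≠ 0) : |r - n| < 1 / 2 := by
  have hN := two_le_abs_cast hn
  have h1 := spikeTerm_supp hn h
  have : |(n : ℝ)| ^ (-a) ≤ 1 := Real.rpow_le_one_of_one_le_of_nonpos (by linarith) (by linarith)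
  linarith

theorem spikyProfile_eq (d ℓ : ℕ) (p r : ℝ) : spikyProfile d ℓ p r =
    ∑' n : {n : ℤ // 2 ≤ |n|}, spikeTerm (p + ℓ + d + 1) p n r := rfl

theorem spikyProfile_of_near (d ℓ : ℕ) {p : ℝ} (hp : 0 ≤ p) {r : ℝ} {n : ℤ} (hn : 2 ≤ |n|)
    (h : |r - n| < 1 / 2) : spikyProfile d ℓ p r = spikeTerm (p + ℓ + d + 1) p n r := by
  rw [spikyProfile_eq]
  refine tsum_eq_single (⟨n, hn⟩ : {n : ℤ // 2 ≤ |n|}) ?_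
  rintro ⟨m, hm⟩ hne
  by_contra hc
  have h1 := spikeTerm_supp' (by positivity) hm hc
  apply hne
  rw [Subtype.mk.injEq]
  have h2 : |(m : ℝ) - n| < 1 := by
    rw [abs_lt] at *
    constructor <;> linarith [h.1, h.2, h1.1, h1.2]
  have h3 : |m - n| < 1 := by exact_mod_cast h2
  rw [Int.abs_lt_one_iff] at h3
  omega

theorem spikyProfile_cases (d ℓ : ℕ) {p : ℝ} (hp : 0 ≤ p) (r : ℝ) :
    spikyProfile d ℓ p r = 0 ∨ ∃ n : ℤ, 2 ≤ |n| ∧ |r - n| < 1 / 2 ∧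
      spikyProfile d ℓ p r = spikeTerm (p + ℓ + d + 1) p n r := by
  by_cases h : ∃ n : ℤ, 2 ≤ |n| ∧ |r - n| < 1 / 2
  · obtain ⟨n, hn, hr⟩ := h
    exact Or.inr ⟨n, hn, hr, spikyProfile_of_near d ℓ hp hn hr⟩
  · left
    rw [spikyProfile_eq]
    have : ∀ n : {n : ℤ // 2 ≤ |n|}, spikeTerm (p + ℓ + d + 1) p n r = 0 := by
      rintro ⟨m, hm⟩
      by_contra hc
      exact h ⟨m, hm, spikeTerm_supp' (by positivity) hm hc⟩
    simp [this]

theorem spikeTerm_measurable (a p : ℝ) (n : ℤ) : Measurable (spikeTerm a p n) := by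
  unfold spikeTerm
  exact (stdBump_measurable.comp (by fun_prop)).const_mul _

theorem spike_lintegral (a p : ℝ) (ha : 0 ≤ a) (hp : 0 ≤ p) (n : ℤ) (hn : 2 ≤ |n|) (j : ℕ)
    (hj : (j : ℝ) + 2 ≤ a) :
    ∫⁻ r : ℝ, ‖|r| ^ j * spikeTerm a p n r‖ₑ ≤
      ENNReal.ofReal (2 ^ j * |(n : ℝ)| ^ (-2 : ℝ)) := by
  have hN := two_le_abs_cast hn
  set δ := |(n : ℝ)| ^ (-a) / 2 with hδ
  have hδ0 : 0 ≤ δ := by positivity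
  have hb : ∀ r : ℝ, ‖|r| ^ j * spikeTerm a p n r‖ₑ ≤
      (Set.Ioo ((n : ℝ) - δ) (n + δ)).indicator
        (fun _ => ENNReal.ofReal ((2 * |(n : ℝ)|) ^ j)) r := by
    intro r
    by_cases h0 : spikeTerm a p n r = 0
    · simp [h0]
    have h1 := spikeTerm_supp hn h0
    have h2 := spikeTerm_supp' ha hn h0
    have hmem : r ∈ Set.Ioo ((n : ℝ) - δ) (n + δ) := by
      rw [abs_lt] at h1
      constructor <;> linarith [h1.1, h1.2]
    rw [Set.indicator_of_mem hmem, Real.enorm_eq_ofReal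
      (mul_nonneg (by positivity) (spikeTerm_nonneg _ _ _ _))]
    apply ENNReal.ofReal_le_ofReal
    have hr : |r| ≤ 2 * |(n : ℝ)| := by
      have := abs_sub_abs_le_abs_sub r n
      linarith
    have ht : spikeTerm a p n r ≤ 1 := by
      unfold spikeTerm
      have e1 : |(n : ℝ)| ^ (-p) ≤ 1 :=
        Real.rpow_le_one_of_one_le_of_nonpos (by linarith) (by linarith)
      exact mul_le_one₀ e1 (stdBump_nonneg _) (stdBump_le_one _)
    calc |r| ^ j * spikeTerm a p n r ≤ |r| ^ j * 1 := by gcongr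
      _ ≤ _ := by rw [mul_one]; gcongr
  refine (MeasureTheory.lintegral_mono hb).trans ?_
  rw [MeasureTheory.lintegral_indicator_const measurableSet_Ioo, Real.volume_Ioo,
    ← ENNReal.ofReal_mul (by positivity)]
  apply ENNReal.ofReal_le_ofReal
  have e : (n : ℝ) + δ - (n - δ) = |(n : ℝ)| ^ (-a) := by rw [hδ]; ring
  rw [e, mul_pow, mul_assoc, ← Real.rpow_natCast |(n : ℝ)| j, ← Real.rpow_add (by linarith)]
  gcongr
  · linarith
  · linarith

theorem spiky_integrable (d ℓ : ℕ) (hd : 1 ≤ d) (p : ℝ) (hp : 0 ≤ p) (j : ℕ)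
    (hj : j ≤ d + ℓ - 1) :
    MeasureTheory.Integrable (fun r : ℝ => |r| ^ j * spikyProfile d ℓ p r) := by
  have hj' : (j : ℝ) + 1 ≤ d + ℓ := by
    have : j + 1 ≤ d + ℓ := by omega
    exact_mod_cast this
  have heq : (fun r : ℝ => |r| ^ j * spikyProfile d ℓ p r) = fun r =>
      ∑' n : {n : ℤ // 2 ≤ |n|}, |r| ^ j * spikeTerm (p + ℓ + d + 1) p n r := by
    funext r
    rw [spikyProfile_eq, tsum_mul_left]
  have hm : ∀ n : {n : ℤ // 2 ≤ |n|},
      Measurable fun r : ℝ => |r| ^ j * spikeTerm (p + ℓ + d + 1) p n r := fun n =>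
    (by fun_prop : Measurable fun r : ℝ => |r| ^ j).mul (spikeTerm_measurable _ _ _)
  rw [heq]
  refine ⟨(Measurable.tsum hm).aestronglyMeasurable, ?_⟩
  rw [MeasureTheory.hasFiniteIntegral_iff_enorm]
  refine (MeasureTheory.lintegral_mono fun r => enorm_tsum_le_tsum_enorm).trans_lt ?_
  rw [MeasureTheory.lintegral_tsum fun n => (hm n).enorm.aemeasurable]
  refine (ENNReal.tsum_le_tsum fun n : {n : ℤ // 2 ≤ |n|} =>
    spike_lintegral (p + ℓ + d + 1) p (by positivity) hp n n.2 j
    (by linarith)).trans_lt ?_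
  have hs : Summable fun n : {n : ℤ // 2 ≤ |n|} => 2 ^ j * |((n : ℤ) : ℝ)| ^ (-2 : ℝ) :=
    ((Real.summable_abs_int_rpow (by norm_num : (1 : ℝ) < 2)).subtype _).mul_left _
  exact hs.tsum_ofReal_lt_top

theorem spiky_int (d ℓ : ℕ) (p : ℝ) (hp : 0 ≤ p) (n : ℤ) (hn : 2 ≤ |n|) :
    spikyProfile d ℓ p (n : ℝ) = |(n : ℝ)| ^ (-p) * Real.exp (-1) := by
  rw [spikyProfile_of_near d ℓ hp hn (by simp)]
  simp [spikeTerm, stdBump]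

theorem spiky_limsup (d ℓ : ℕ) (p : ℝ) (hp : 0 ≤ p) :
    0 < Filter.limsup (fun r : ℝ => r ^ p * spikyProfile d ℓ p r) Filter.atTop := by
  refine (Real.exp_pos (-1)).trans_le (le_limsup_of_frequently_le ?_ ?_)
  · rw [Filter.frequently_atTop]
    intro b
    obtain ⟨m, hm⟩ := exists_nat_ge b
    have h2 : (2 : ℤ) ≤ |((m + 2 : ℕ) : ℤ)| := by
      rw [abs_of_nonneg (by positivity)]; push_cast; omega
    refine ⟨((m + 2 : ℕ) : ℤ), ?_, ?_⟩
    · push_cast; linarith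
    · rw [spiky_int d ℓ p hp _ h2, abs_of_nonneg (by positivity), ← mul_assoc,
        ← Real.rpow_add (by push_cast; positivity)]
      simp
  · refine Filter.isBoundedUnder_of_eventually_le (a := 2 ^ p) ?_
    filter_upwards [Filter.eventually_ge_atTop 0] with r hr
    rcases spikyProfile_cases d ℓ hp r with h | ⟨n, hn, hrn, h⟩
    · rw [h, mul_zero]; positivity
    · have hN := two_le_abs_cast hn
      have hr2 : r ≤ 2 * |(n : ℝ)| := by
        have := abs_sub_abs_le_abs_sub r n
        have := le_abs_self r
        linarith
      have hN0 : 0 < |(n : ℝ)| ^ p := Real.rpow_pos_of_pos (by linarith) _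
      rw [h, spikeTerm]
      calc r ^ p * (|(n : ℝ)| ^ (-p) * _) ≤ (2 * |(n : ℝ)|) ^ p * (|(n : ℝ)| ^ (-p) * 1) := by
            gcongr
            · exact mul_nonneg (by positivity) (stdBump_nonneg _)
            · exact stdBump_le_one _
        _ = 2 ^ p := by
            rw [Real.mul_rpow (by norm_num) (by positivity), Real.rpow_neg (by positivity)]
            field_simp

theorem spikyProfile_moments_and_no_fast_decay (d ℓ : ℕ) (hd : 1 ≤ d)
    (p : ℝ) (hp : 0 ≤ p) :
    (∀ j : ℕ, j ≤ d + ℓ - 1 →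
      MeasureTheory.Integrable (fun r : ℝ => |r| ^ j * spikyProfile d ℓ p r)) ∧
    (∀ n : ℤ, 2 ≤ |n| →
      spikyProfile d ℓ p (n : ℝ) = |(n : ℝ)| ^ (-p) * Real.exp (-1)) ∧
    0 < Filter.limsup (fun r : ℝ => r ^ p * spikyProfile d ℓ p r) Filter.atTop := by
  exact ⟨fun j hj => spiky_integrable d ℓ hd p hp j hj, fun n hn => spiky_int d ℓ p hp n hn,
    spiky_limsup d ℓ p hp⟩
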